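/- Let k = 2k₁ be even, let ℓ ≥ 2 be even, and let X = R†_{k×k,ℓ}, with minimal-weight subspace X^{(ℓ)} = X ∩ span{u(m₁,m₂) : u ∈ A, m₁+m₂+1 = ℓ} and product u ∘ v = u⁽ˡ⁻¹⁾v ((ℓ-1)-th product) on X^{(ℓ)}. Then X^{(ℓ)} = {w(0,ℓ-1) : w ∈ A, w† = w}, for all w, w' ∈ A with w† = w and w'† = w' one has w(0,ℓ-1) ∘ w'(0,ℓ-1) = -(ww'+w'w)(0,ℓ-1), and the linear map w ↦ -w(0,ℓ-1) is an isomorphism from the Jordan algebra {w ∈ A : w† = w} (with product w∗w' = ww'+w'w) onto (X^{(ℓ)}, ∘); hence (X^{(ℓ)}, ∘) is a simple Jordan algebra of type C, independent of ℓ. -/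

import Mathlib

/-- The carrier of `R_{k×k} = M_k(F) ⊗ F[t₁,t₂]`: the element `u(m,n) = u ⊗ t₁^m t₂^n`
is encoded as `Finsupp.single (m, n) u`. -/
abbrev MatCarrier (F : Type*) [Field F] (k : ℕ) :=
  (ℕ × ℕ) →₀ Matrix (Fin k) (Fin k) F

/-- The operator `∂` on `R_{k×k}`:
`∂(u(m,n)) = (m+1)·u(m+1,n) + (n+1)·u(m,n+1)`. -/
noncomputable def mD (F : Type*) [Field F] (k : ℕ) :
    MatCarrier F k → MatCarrier F k :=
  fun f => f.sum fun p u =>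
    (((p.1 + 1 : ℕ) : F)) • Finsupp.single (p.1 + 1, p.2) u +
    (((p.2 + 1 : ℕ) : F)) • Finsupp.single (p.1, p.2 + 1) u

/-- The `s`-th product on `R_{k×k}`: the coefficient of `z^{-s-1}` in
`Y⁺(u(m₁,m₂),z)(v(n₁,n₂)) =
  binom(-n₁-1,m₂)·Σ_p binom(p,m₁)·(uv)(p,n₂)·z^{p-m₁-m₂-n₁-1}
  - binom(-n₂-1,m₁)·Σ_q binom(q,m₂)·(vu)(n₁,q)·z^{q-m₁-m₂-n₂-1}`,
extended bilinearly, where `binom(-a-1,b) = (-1)^b·binom(a+b,b)`. -/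
noncomputable def mProd (F : Type*) [Field F] (k : ℕ) (s : ℕ)
    (f g : MatCarrier F k) : MatCarrier F k :=
  f.sum fun p u => g.sum fun q v =>
    (if s ≤ p.1 + p.2 + q.1 then
      ((-1 : F) ^ p.2 * ((q.1 + p.2).choose p.2 : F) *
        ((p.1 + p.2 + q.1 - s).choose p.1 : F)) •
        Finsupp.single (p.1 + p.2 + q.1 - s, q.2) (u * v)
     else 0) -
    (if s ≤ p.1 + p.2 + q.2 then
      ((-1 : F) ^ p.1 * ((q.2 + p.1).choose p.1 : F) *
        ((p.1 + p.2 + q.2 - s).choose p.2 : F)) •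
        Finsupp.single (q.1, p.1 + p.2 + q.2 - s) (v * u)
     else 0)

/-- The weight space `R_{k×k}^{(n)} = span{u(m₁,m₂) : m₁ + m₂ + 1 = n}`. -/
noncomputable def mWeight (F : Type*) [Field F] (k : ℕ) (n : ℕ) :
    Submodule F (MatCarrier F k) :=
  Submodule.span F {x | ∃ (u : Matrix (Fin k) (Fin k) F) (m₁ m₂ : ℕ),
    m₁ + m₂ + 1 = n ∧ x = Finsupp.single (m₁, m₂) u}

/-- For even `k = k₁ + k₁`, the involutive anti-automorphism
`u† = [[0,-I],[I,0]] · uᵀ · [[0,I],[-I,0]]` of `M_k(F)`. -/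
noncomputable def mDagger (F : Type*) [Field F] (k₁ : ℕ)
    (u : Matrix (Fin (k₁ + k₁)) (Fin (k₁ + k₁)) F) :
    Matrix (Fin (k₁ + k₁)) (Fin (k₁ + k₁)) F :=
  (Matrix.reindex finSumFinEquiv finSumFinEquiv
      (Matrix.fromBlocks (0 : Matrix (Fin k₁) (Fin k₁) F) (-1) 1 0)) *
    u.transpose *
  (Matrix.reindex finSumFinEquiv finSumFinEquiv
      (Matrix.fromBlocks (0 : Matrix (Fin k₁) (Fin k₁) F) 1 (-1) 0))

/-- The subspace `R†_{k×k,ℓ} = span{binom(n+ℓ-1,ℓ-1)·u(m,n+ℓ-1)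
- (-1)^{ℓ-1}·binom(m+ℓ-1,ℓ-1)·u†(n,m+ℓ-1) : u ∈ A, m, n ∈ ℕ}` (`ℓ ≥ 1`, `k = k₁+k₁`). -/
noncomputable def RkklDagger (F : Type*) [Field F] (k₁ ℓ : ℕ) :
    Submodule F (MatCarrier F (k₁ + k₁)) :=
  Submodule.span F {x | ∃ (u : Matrix (Fin (k₁ + k₁)) (Fin (k₁ + k₁)) F) (m n : ℕ),
    x = (((n + ℓ - 1).choose (ℓ - 1) : F)) • Finsupp.single (m, n + ℓ - 1) u -
        ((-1 : F) ^ (ℓ - 1) * (((m + ℓ - 1).choose (ℓ - 1) : F))) •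
          Finsupp.single (n, m + ℓ - 1) (mDagger F k₁ u)}

/-- The elements `w(0,ℓ-1)` with `w† = w`. -/
noncomputable def dagMinSet (F : Type*) [Field F] (k₁ ℓ : ℕ) :
    Set (MatCarrier F (k₁ + k₁)) :=
  {x | ∃ w : Matrix (Fin (k₁ + k₁)) (Fin (k₁ + k₁)) F, mDagger F k₁ w = w ∧
    x = Finsupp.single ((0 : ℕ), ℓ - 1) w}

/-!
Let `J` be an invertible skew-symmetric matrix and `u† = J⁻¹uᵀJ` the adjoint of `u` for the form
`x ⬝ᵥ J y`; the involution of the theorem is the case of the standard symplectic form. Elements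
of the minimal-weight subspace are supported at the single exponent `(0, ℓ - 1)`, where the
generators of `R†_{k×k,ℓ}` have the value `0` or `u + u†`, and there the `(ℓ-1)`-th product is
minus the anticommutator.

To see simplicity, note that an ideal `I` of the `†`-symmetric matrices satisfies `a b a ∈ I` for
`b ∈ I`. With `x = p rᵀ` and `a = x + x†`, the cross terms of `a b a` vanish because they contain
values `v ⬝ᵥ M v` of skew-symmetric matrices `M`, leaving `a b a = (r ⬝ᵥ b p) a`. If `b ≠ 0`, the
matrices `p rᵀ` with `r ⬝ᵥ b p ≠ 0` generate all matrices, so `I` contains every `u + u†`.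
-/

open Matrix

section Generation

variable {R V W N M : Type*} [CommRing R] [AddCommGroup V] [Module R V] [AddCommGroup W]
  [Module R W] [AddCommGroup N] [Module R N] [AddCommGroup M] [Module R M]

-- Each step uses that a module is not the union of two proper submodules.
lemma apply_mem_of_forall_ne_zero {B : V →ₗ[R] W →ₗ[R] N} (hB : B ≠ 0) {f : V →ₗ[R] W →ₗ[R] M}
    {S : Submodule R M} (hf : ∀ p q, B p q ≠ 0 → f p q ∈ S) (p : V) (q : W) : f p q ∈ S := by
  have fixed_left (p : V) : B p = 0 ∨ ∀ q, f p q ∈ S := by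
    have cover : ((⊤ : Submodule R W) : Set W) ⊆ (B p).ker ∪ S.comap (f p) :=
      fun q _ => or_iff_not_imp_left.2 (hf p q)
    refine (AddSubgroupClass.subset_union.1 cover).imp ?_ ?_
    · exact fun h => LinearMap.ker_eq_top.1 (top_le_iff.1 h)
    · exact fun h q => h (Submodule.mem_top (x := q))
  have cover : ((⊤ : Submodule R V) : Set V) ⊆ B.ker ∪ (⨅ q, S.comap (f.flip q) : Submodule R V) :=
    fun p _ => (fixed_left p).imp id fun h => (Submodule.mem_iInf _).2 h
  rcases AddSubgroupClass.subset_union.1 cover with h | h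
  · exact absurd (LinearMap.ker_eq_top.1 (top_le_iff.1 h)) hB
  · exact (Submodule.mem_iInf _).1 (h (Submodule.mem_top (x := p))) q

variable {m n : Type*}

lemma eq_top_of_forall_vecMulVec_mem [Finite m] [Finite n] {S : Submodule R (Matrix m n R)}
    (hS : ∀ p r, vecMulVec p r ∈ S) : S = ⊤ := by
  classical
  cases nonempty_fintype m
  cases nonempty_fintype n
  refine eq_top_iff.2 fun u _ => ?_
  rw [matrix_eq_sum_single u]
  refine S.sum_mem fun i _ => S.sum_mem fun j _ => ?_
  rw [← mul_one (u i j), ← smul_eq_mul, ← smul_single, single_eq_single_vecMulVec_single]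
  exact S.smul_mem _ (hS _ _)

lemma eq_top_of_vecMulVec_mem_of_dotProduct_ne_zero [Fintype m] [Fintype n] {b : Matrix n m R}
    (hb : b ≠ 0) {S : Submodule R (Matrix m n R)}
    (hS : ∀ p r, r ⬝ᵥ b *ᵥ p ≠ 0 → vecMulVec p r ∈ S) : S = ⊤ := by
  classical
  let B : (m → R) →ₗ[R] (n → R) →ₗ[R] R := (toLinearMap₂' R b).flip
  have hB : B ≠ 0 := fun h => hb <| by
    ext i j
    simpa [B, toLinearMap₂'_apply'] using congr($h (Pi.single j 1) (Pi.single i 1))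
  refine eq_top_of_forall_vecMulVec_mem fun p r =>
    apply_mem_of_forall_ne_zero hB (f := vecMulVecBilin R R) (fun p r hpr => hS p r ?_) p r
  simpa [B, toLinearMap₂'_apply'] using hpr

end Generation

section RankOne

variable {R m n : Type*} [CommRing R] [Fintype n]

lemma vecMulVec_mul_mul_vecMulVec [Fintype m] {l o : Type*} (p : l → R) (r : m → R)
    (b : Matrix m n R) (s : n → R) (t : o → R) :
    vecMulVec p r * b * vecMulVec s t = (r ⬝ᵥ b *ᵥ s) • vecMulVec p t := by
  rw [vecMulVec_mul, vecMulVec_mul_vecMulVec, ← dotProduct_mulVec, vecMulVec_smul]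

lemma dotProduct_mulVec_self_eq_zero_of_transpose_eq_neg [NoZeroDivisors R] [NeZero (2 : R)]
    {M : Matrix n n R} (hM : Mᵀ = -M) (v : n → R) : v ⬝ᵥ M *ᵥ v = 0 := by
  have h : v ⬝ᵥ M *ᵥ v = -(v ⬝ᵥ M *ᵥ v) := by
    rw [← dotProduct_neg, ← neg_mulVec, ← hM, mulVec_transpose, dotProduct_mulVec,
      dotProduct_comm]
  have h_two : 2 * (v ⬝ᵥ M *ᵥ v) = 0 := by linear_combination h
  exact (mul_eq_zero.1 h_two).resolve_left two_ne_zero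

end RankOne

section FormAdjoint

variable {R n : Type*} [CommRing R] [Fintype n] [DecidableEq n] {J : Matrix n n R}

/-- The adjoint `J⁻¹uᵀJ` of `u` with respect to the bilinear form `x ⬝ᵥ J y`, as a linear map
of `u`. It is meaningful for `J` invertible. -/
noncomputable def formAdjoint (J : Matrix n n R) : Matrix n n R →ₗ[R] Matrix n n R :=
  LinearMap.mulLeftRight R (J⁻¹, J) ∘ₗ (transposeLinearEquiv n n R R).toLinearMap

lemma formAdjoint_apply (J u : Matrix n n R) : formAdjoint J u = J⁻¹ * uᵀ * J := rfl

lemma formAdjoint_eq_self_iff (hJ : IsUnit J.det) {u : Matrix n n R} :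
    formAdjoint J u = u ↔ u ∈ selfAdjointMatricesSubmodule J := by
  rw [mem_selfAdjointMatricesSubmodule, Matrix.IsSelfAdjoint, Matrix.IsAdjointPair,
    formAdjoint_apply, mul_assoc]
  constructor <;> intro h
  · rw [← h, mul_nonsing_inv_cancel_left _ _ hJ, h]
  · rw [h, nonsing_inv_mul_cancel_left _ _ hJ]

lemma formAdjoint_mul (hJ : IsUnit J.det) (u v : Matrix n n R) :
    formAdjoint J (u * v) = formAdjoint J v * formAdjoint J u := by
  simp only [formAdjoint_apply, transpose_mul, mul_assoc, mul_nonsing_inv_cancel_left _ _ hJ]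

lemma transpose_inv_eq_neg (hJ : IsUnit J.det) (hskew : Jᵀ = -J) : (J⁻¹)ᵀ = -J⁻¹ := by
  rw [transpose_nonsing_inv, hskew]
  exact inv_eq_right_inv (by rw [neg_mul_neg, mul_nonsing_inv _ hJ])

lemma formAdjoint_formAdjoint (hJ : IsUnit J.det) (hskew : Jᵀ = -J) (u : Matrix n n R) :
    formAdjoint J (formAdjoint J u) = u := by
  simp only [formAdjoint_apply, transpose_mul, transpose_transpose, hskew,
    transpose_inv_eq_neg hJ hskew, neg_mul, mul_neg, neg_neg, nonsing_inv_mul_cancel_left _ _ hJ,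
    mul_assoc, nonsing_inv_mul _ hJ, mul_one]

lemma add_formAdjoint_mem (hJ : IsUnit J.det) (hskew : Jᵀ = -J) (u : Matrix n n R) :
    u + formAdjoint J u ∈ selfAdjointMatricesSubmodule J := by
  rw [← formAdjoint_eq_self_iff hJ, map_add, formAdjoint_formAdjoint hJ hskew, add_comm]

lemma one_mem_selfAdjointMatricesSubmodule : 1 ∈ selfAdjointMatricesSubmodule J := by
  simp [Matrix.IsSelfAdjoint, Matrix.IsAdjointPair]

lemma mul_add_mul_mem_selfAdjointMatricesSubmodule {a b : Matrix n n R}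
    (ha : a ∈ selfAdjointMatricesSubmodule J) (hb : b ∈ selfAdjointMatricesSubmodule J) :
    a * b + b * a ∈ selfAdjointMatricesSubmodule J := by
  simp only [mem_selfAdjointMatricesSubmodule, Matrix.IsSelfAdjoint, Matrix.IsAdjointPair] at *
  rw [transpose_add, transpose_mul, transpose_mul, add_mul, mul_add, mul_assoc, ha, mul_assoc, hb,
    ← mul_assoc, hb, ← mul_assoc, ha, mul_assoc, mul_assoc, add_comm]

lemma mul_self_mem_selfAdjointMatricesSubmodule {a : Matrix n n R}
    (ha : a ∈ selfAdjointMatricesSubmodule J) : a * a ∈ selfAdjointMatricesSubmodule J := by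
  simp only [mem_selfAdjointMatricesSubmodule, Matrix.IsSelfAdjoint, Matrix.IsAdjointPair] at *
  rw [transpose_mul, mul_assoc, ha, ← mul_assoc, ha, mul_assoc]

variable [NoZeroDivisors R] [NeZero (2 : R)]

lemma formAdjoint_vecMulVec_mul_mul_vecMulVec (hskew : Jᵀ = -J) {b : Matrix n n R}
    (hb : J.IsSelfAdjoint b) (p r : n → R) :
    formAdjoint J (vecMulVec p r) * b * vecMulVec p r = 0 := by
  have skew : (J * b)ᵀ = -(J * b) := by
    rw [transpose_mul, hskew, mul_neg, hb]
  calc formAdjoint J (vecMulVec p r) * b * vecMulVec p r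
      = J⁻¹ * (vecMulVec r p * (J * b) * vecMulVec p r) := by
        simp only [formAdjoint_apply, transpose_vecMulVec, mul_assoc]
    _ = 0 := by
        rw [vecMulVec_mul_mul_vecMulVec, dotProduct_mulVec_self_eq_zero_of_transpose_eq_neg skew,
          zero_smul, mul_zero]

lemma vecMulVec_mul_mul_formAdjoint_vecMulVec (hJ : IsUnit J.det) (hskew : Jᵀ = -J)
    {b : Matrix n n R} (hb : J.IsSelfAdjoint b) (p r : n → R) :
    vecMulVec p r * b * formAdjoint J (vecMulVec p r) = 0 := by
  have skew : (b * J⁻¹)ᵀ = -(b * J⁻¹) := by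
    have hb' : J⁻¹ * bᵀ = b * J⁻¹ := by
      rw [← mul_nonsing_inv_cancel_right _ (J⁻¹ * bᵀ) hJ, mul_assoc J⁻¹, hb,
        nonsing_inv_mul_cancel_left _ _ hJ]
    rw [transpose_mul, transpose_inv_eq_neg hJ hskew, neg_mul, hb']
  calc vecMulVec p r * b * formAdjoint J (vecMulVec p r)
      = vecMulVec p r * (b * J⁻¹) * vecMulVec r p * J := by
        simp only [formAdjoint_apply, transpose_vecMulVec, mul_assoc]
    _ = 0 := by
        rw [vecMulVec_mul_mul_vecMulVec, dotProduct_mulVec_self_eq_zero_of_transpose_eq_neg skew,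
          zero_smul, zero_mul]

lemma add_formAdjoint_mul_mul_add_formAdjoint (hJ : IsUnit J.det) (hskew : Jᵀ = -J)
    {b : Matrix n n R} (hb : b ∈ selfAdjointMatricesSubmodule J) (p r : n → R) :
    (vecMulVec p r + formAdjoint J (vecMulVec p r)) * b *
        (vecMulVec p r + formAdjoint J (vecMulVec p r)) =
      (r ⬝ᵥ b *ᵥ p) • (vecMulVec p r + formAdjoint J (vecMulVec p r)) := by
  have hb' : J.IsSelfAdjoint b := (mem_selfAdjointMatricesSubmodule J b).1 hb
  have diag := vecMulVec_mul_mul_vecMulVec p r b p r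
  have diag_adjoint : formAdjoint J (vecMulVec p r) * b * formAdjoint J (vecMulVec p r) =
      (r ⬝ᵥ b *ᵥ p) • formAdjoint J (vecMulVec p r) := by
    rw [← map_smul, ← diag, formAdjoint_mul hJ, formAdjoint_mul hJ,
      (formAdjoint_eq_self_iff hJ).2 hb, mul_assoc]
  rw [add_mul, add_mul, mul_add, mul_add, diag, diag_adjoint,
    vecMulVec_mul_mul_formAdjoint_vecMulVec hJ hskew hb',
    formAdjoint_vecMulVec_mul_mul_vecMulVec hskew hb', add_zero, zero_add, smul_add]

end FormAdjoint

section JordanIdeal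

variable {F : Type*} [Field F] [NeZero (2 : F)]

-- `2 a b a = a ∘ (a ∘ b) - a² ∘ b` for the anticommutator `∘`.
lemma mul_mul_mem_of_forall_anticommutator_mem {A : Type*} [Ring A] [Module F A]
    {H I : Submodule F A} (hI : ∀ a ∈ H, ∀ b ∈ I, a * b + b * a ∈ I) {a b : A} (ha : a ∈ H)
    (haa : a * a ∈ H) (hb : b ∈ I) : a * b * a ∈ I := by
  have h := I.sub_mem (hI a ha _ (hI a ha b hb)) (hI (a * a) haa b hb)
  have two_smul_eq : a * (a * b + b * a) + (a * b + b * a) * a - (a * a * b + b * (a * a))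
      = (2 : F) • (a * b * a) := by
    rw [two_smul]
    noncomm_ring
  rwa [two_smul_eq, I.smul_mem_iff two_ne_zero] at h

variable {n : Type*} [Fintype n] [DecidableEq n] {J : Matrix n n F}

theorem eq_bot_or_eq_selfAdjointMatricesSubmodule (hJ : IsUnit J.det) (hskew : Jᵀ = -J)
    {I : Submodule F (Matrix n n F)} (hI : I ≤ selfAdjointMatricesSubmodule J)
    (hideal : ∀ a ∈ selfAdjointMatricesSubmodule J, ∀ b ∈ I, a * b + b * a ∈ I) :
    I = ⊥ ∨ I = selfAdjointMatricesSubmodule J := by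
  refine or_iff_not_imp_left.2 fun hne => le_antisymm hI fun w hw => ?_
  obtain ⟨b, hb, hb0⟩ := Submodule.exists_mem_ne_zero_of_ne_bot hne
  have comap_eq_top : I.comap (LinearMap.id + formAdjoint J) = ⊤ := by
    refine eq_top_of_vecMulVec_mem_of_dotProduct_ne_zero hb0 fun p r hpr => ?_
    have ha := add_formAdjoint_mem hJ hskew (vecMulVec p r)
    have h := mul_mul_mem_of_forall_anticommutator_mem hideal ha
      (mul_self_mem_selfAdjointMatricesSubmodule ha) hb
    rwa [add_formAdjoint_mul_mul_add_formAdjoint hJ hskew (hI hb), I.smul_mem_iff hpr] at h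
  have h : w + formAdjoint J w ∈ I := comap_eq_top.ge (Submodule.mem_top (x := w))
  rwa [(formAdjoint_eq_self_iff hJ).2 hw, ← two_smul F w, I.smul_mem_iff two_ne_zero] at h

end JordanIdeal

section Dagger

variable {F : Type*} [Field F] {k₁ : ℕ}

/-- The standard symplectic form `Matrix.J`, with its index type `Fin k₁ ⊕ Fin k₁` identified
with `Fin (k₁ + k₁)`. -/
def symplecticForm (F : Type*) [Field F] (k₁ : ℕ) :
    Matrix (Fin (k₁ + k₁)) (Fin (k₁ + k₁)) F :=
  reindex finSumFinEquiv finSumFinEquiv (Matrix.J (Fin k₁) F)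

lemma transpose_symplecticForm : (symplecticForm F k₁)ᵀ = -symplecticForm F k₁ := by
  rw [symplecticForm, transpose_reindex, J_transpose]
  rfl

lemma isUnit_det_symplecticForm : IsUnit (symplecticForm F k₁).det := by
  rw [symplecticForm, det_reindex_self]
  exact isUnit_det_J _ _

lemma inv_symplecticForm : (symplecticForm F k₁)⁻¹ = -symplecticForm F k₁ := by
  rw [symplecticForm, inv_reindex, J_inv]
  rfl

lemma mDagger_eq_formAdjoint (u : Matrix (Fin (k₁ + k₁)) (Fin (k₁ + k₁)) F) :
    mDagger F k₁ u = formAdjoint (symplecticForm F k₁) u := by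
  have right_factor : reindex finSumFinEquiv finSumFinEquiv
      (fromBlocks (0 : Matrix (Fin k₁) (Fin k₁) F) 1 (-1) 0) = -symplecticForm F k₁ := by
    have h : fromBlocks (0 : Matrix (Fin k₁) (Fin k₁) F) 1 (-1) 0 = -Matrix.J (Fin k₁) F := by
      simp [Matrix.J, fromBlocks_neg]
    rw [h]
    rfl
  rw [mDagger, right_factor, formAdjoint_apply, inv_symplecticForm, mul_neg, neg_mul, neg_mul]
  rfl

/-- The space `{w : w† = w}`, encoded as the self-adjoint matrices of the symplectic form. -/
noncomputable abbrev daggerFixed (F : Type*) [Field F] (k₁ : ℕ) :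
    Submodule F (Matrix (Fin (k₁ + k₁)) (Fin (k₁ + k₁)) F) :=
  selfAdjointMatricesSubmodule (symplecticForm F k₁)

lemma mDagger_eq_self_iff {w : Matrix (Fin (k₁ + k₁)) (Fin (k₁ + k₁)) F} :
    mDagger F k₁ w = w ↔ w ∈ daggerFixed F k₁ := by
  rw [mDagger_eq_formAdjoint, formAdjoint_eq_self_iff isUnit_det_symplecticForm]

lemma add_mDagger_mem_daggerFixed (u : Matrix (Fin (k₁ + k₁)) (Fin (k₁ + k₁)) F) :
    u + mDagger F k₁ u ∈ daggerFixed F k₁ := by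
  rw [mDagger_eq_formAdjoint]
  exact add_formAdjoint_mem isUnit_det_symplecticForm transpose_symplecticForm u

end Dagger

section MinimalWeight

variable {F : Type*} [Field F] {k₁ ℓ : ℕ}

lemma dagMinSet_eq_map :
    dagMinSet F k₁ ℓ = (daggerFixed F k₁).map (Finsupp.lsingle (0, ℓ - 1)) := by
  ext x
  simp only [dagMinSet, mDagger_eq_self_iff, Set.mem_ofPred_eq, SetLike.mem_coe,
    Submodule.mem_map, Finsupp.lsingle_apply, eq_comm (a := x)]

lemma mWeight_le_supported {k d : ℕ} :
    mWeight F k d ≤ Finsupp.supported (Matrix (Fin k) (Fin k) F) F {p | p.1 + p.2 + 1 = d} := by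
  refine Submodule.span_le.2 ?_
  rintro _ ⟨u, m, n, hmn, rfl⟩
  exact Finsupp.single_mem_supported F u hmn

lemma RkklDagger_le_supported :
    RkklDagger F k₁ ℓ ≤
      Finsupp.supported (Matrix (Fin (k₁ + k₁)) (Fin (k₁ + k₁)) F) F {p | ℓ - 1 ≤ p.2} := by
  refine Submodule.span_le.2 ?_
  rintro _ ⟨u, m, n, rfl⟩
  have single_mem (i j : ℕ) (v : Matrix (Fin (k₁ + k₁)) (Fin (k₁ + k₁)) F) :
      Finsupp.single (i, j + ℓ - 1) v ∈ Finsupp.supported _ F {p : ℕ × ℕ | ℓ - 1 ≤ p.2} :=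
    Finsupp.single_mem_supported F v (by simp only [Set.mem_ofPred_eq]; omega)
  exact sub_mem (Submodule.smul_mem _ _ (single_mem m n u))
    (Submodule.smul_mem _ _ (single_mem n m _))

lemma eq_single_of_mem_RkklDagger_of_mem_mWeight {x : MatCarrier F (k₁ + k₁)}
    (hx : x ∈ RkklDagger F k₁ ℓ) (hx' : x ∈ mWeight F (k₁ + k₁) ℓ) :
    x = Finsupp.single (0, ℓ - 1) (x (0, ℓ - 1)) := by
  rw [← Finsupp.support_subset_singleton]
  rintro ⟨i, j⟩ hij
  have h_le : ℓ - 1 ≤ j := (Finsupp.mem_supported F x).1 (RkklDagger_le_supported hx) hij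
  have h_eq : i + j + 1 = ℓ := (Finsupp.mem_supported F x).1 (mWeight_le_supported hx') hij
  rw [Finset.mem_singleton, Prod.mk.injEq]
  omega

lemma apply_mem_daggerFixed_of_mem_RkklDagger (hℓ : Odd (ℓ - 1)) {x : MatCarrier F (k₁ + k₁)}
    (hx : x ∈ RkklDagger F k₁ ℓ) : x (0, ℓ - 1) ∈ daggerFixed F k₁ := by
  suffices h : RkklDagger F k₁ ℓ ≤ (daggerFixed F k₁).comap (Finsupp.lapply (0, ℓ - 1)) from h hx
  refine Submodule.span_le.2 ?_
  rintro _ ⟨u, m, n, rfl⟩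
  have hpos := hℓ.pos
  rw [SetLike.mem_coe, Submodule.mem_comap, Finsupp.lapply_apply]
  by_cases hmn : m = 0 ∧ n = 0
  · obtain ⟨rfl, rfl⟩ := hmn
    simpa [hℓ.neg_one_pow] using add_mDagger_mem_daggerFixed u
  · have hu : (0, ℓ - 1) ≠ (m, n + ℓ - 1) := by rw [Ne, Prod.mk.injEq]; omega
    have hu' : (0, ℓ - 1) ≠ (n, m + ℓ - 1) := by rw [Ne, Prod.mk.injEq]; omega
    simp [Finsupp.single_eq_of_ne hu, Finsupp.single_eq_of_ne hu']

lemma single_mem_RkklDagger [NeZero (2 : F)] (hℓ : Odd (ℓ - 1))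
    {w : Matrix (Fin (k₁ + k₁)) (Fin (k₁ + k₁)) F} (hw : mDagger F k₁ w = w) :
    Finsupp.single (0, ℓ - 1) w ∈ RkklDagger F k₁ ℓ := by
  rw [← Submodule.smul_mem_iff _ (two_ne_zero (α := F))]
  refine Submodule.subset_span ⟨w, 0, 0, ?_⟩
  simp [hw, hℓ.neg_one_pow, two_smul]

lemma RkklDagger_inf_mWeight_eq_dagMinSet [NeZero (2 : F)] (hℓ : Odd (ℓ - 1)) :
    ((RkklDagger F k₁ ℓ ⊓ mWeight F (k₁ + k₁) ℓ : Submodule F (MatCarrier F (k₁ + k₁))) :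
      Set (MatCarrier F (k₁ + k₁))) = dagMinSet F k₁ ℓ := by
  refine Set.Subset.antisymm ?_ ?_
  · rintro x ⟨hx, hx'⟩
    exact ⟨_, mDagger_eq_self_iff.2 (apply_mem_daggerFixed_of_mem_RkklDagger hℓ hx),
      eq_single_of_mem_RkklDagger_of_mem_mWeight hx hx'⟩
  · rintro _ ⟨w, hw, rfl⟩
    have hpos := hℓ.pos
    exact ⟨single_mem_RkklDagger hℓ hw, Submodule.subset_span ⟨w, 0, ℓ - 1, by omega, rfl⟩⟩

lemma image_neg_single_eq_dagMinSet :
    (fun w => -(Finsupp.single (0, ℓ - 1) w : MatCarrier F (k₁ + k₁))) ''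
      {w | mDagger F k₁ w = w} = dagMinSet F k₁ ℓ := by
  have image_single : Finsupp.single (0, ℓ - 1) '' {w | mDagger F k₁ w = w} = dagMinSet F k₁ ℓ := by
    ext x
    simp only [dagMinSet, Set.mem_image, Set.mem_ofPred_eq, eq_comm (a := x)]
  rw [← Set.image_image Neg.neg, image_single, dagMinSet_eq_map, Set.image_neg_eq_neg, neg_coe_set]

end MinimalWeight

section MinimalWeightProduct

variable {F : Type*} [Field F] {k : ℕ}

lemma mProd_single_single (s m₁ m₂ n₁ n₂ : ℕ) (u v : Matrix (Fin k) (Fin k) F) :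
    mProd F k s (Finsupp.single (m₁, m₂) u) (Finsupp.single (n₁, n₂) v) =
      (if s ≤ m₁ + m₂ + n₁ then
        ((-1 : F) ^ m₂ * ((n₁ + m₂).choose m₂ : F) * ((m₁ + m₂ + n₁ - s).choose m₁ : F)) •
          Finsupp.single (m₁ + m₂ + n₁ - s, n₂) (u * v)
      else 0) -
      (if s ≤ m₁ + m₂ + n₂ then
        ((-1 : F) ^ m₁ * ((n₂ + m₁).choose m₁ : F) * ((m₁ + m₂ + n₂ - s).choose m₂ : F)) •
          Finsupp.single (n₁, m₁ + m₂ + n₂ - s) (v * u)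
      else 0) := by
  rw [mProd, Finsupp.sum_single_index (by simp), Finsupp.sum_single_index (by simp)]

lemma mProd_single_zero_single_zero {d : ℕ} (hd : Odd d) (u v : Matrix (Fin k) (Fin k) F) :
    mProd F k d (Finsupp.single (0, d) u) (Finsupp.single (0, d) v) =
      -Finsupp.single (0, d) (u * v + v * u) := by
  simp only [mProd_single_single, zero_add, add_zero, le_refl, le_add_iff_nonneg_right, zero_le,
    if_true, tsub_self, add_tsub_cancel_right, Nat.choose_self, Nat.choose_zero_right, Nat.cast_one,
    pow_zero, mul_one, hd.neg_one_pow, neg_smul, one_smul]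
  rw [Finsupp.single_add, neg_add, sub_eq_add_neg]

lemma mProd_single_zero_jordan_identity {d : ℕ} (hd : Odd d) (u v : Matrix (Fin k) (Fin k) F) :
    let x : MatCarrier F k := Finsupp.single (0, d) u
    let y : MatCarrier F k := Finsupp.single (0, d) v
    mProd F k d (mProd F k d (mProd F k d x x) y) x =
      mProd F k d (mProd F k d x x) (mProd F k d y x) := by
  simp only [mProd_single_zero_single_zero hd, ← Finsupp.single_neg]
  congr 1
  noncomm_ring

lemma mProd_mem_dagMinSet {k₁ ℓ : ℕ} (hℓ : Odd (ℓ - 1)) {x y : MatCarrier F (k₁ + k₁)}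
    (hx : x ∈ dagMinSet F k₁ ℓ) (hy : y ∈ dagMinSet F k₁ ℓ) :
    mProd F (k₁ + k₁) (ℓ - 1) x y ∈ dagMinSet F k₁ ℓ := by
  obtain ⟨u, hu, rfl⟩ := hx
  obtain ⟨v, hv, rfl⟩ := hy
  rw [mDagger_eq_self_iff] at hu hv
  rw [mProd_single_zero_single_zero hℓ, dagMinSet_eq_map]
  exact neg_mem (Submodule.mem_map_of_mem (mul_add_mul_mem_selfAdjointMatricesSubmodule hu hv))

lemma exists_mProd_ne_zero_of_mem_dagMinSet [NeZero (2 : F)] {k₁ ℓ : ℕ} (hk₁ : 1 ≤ k₁)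
    (hℓ : Odd (ℓ - 1)) :
    ∃ x ∈ dagMinSet F k₁ ℓ, ∃ y ∈ dagMinSet F k₁ ℓ, mProd F (k₁ + k₁) (ℓ - 1) x y ≠ 0 := by
  have : Nonempty (Fin (k₁ + k₁)) := ⟨⟨0, by omega⟩⟩
  have h_one : mDagger F k₁ 1 = 1 := mDagger_eq_self_iff.2 one_mem_selfAdjointMatricesSubmodule
  refine ⟨_, ⟨1, h_one, rfl⟩, _, ⟨1, h_one, rfl⟩, ?_⟩
  rw [mProd_single_zero_single_zero hℓ, neg_ne_zero, Finsupp.single_ne_zero, mul_one,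
    ← two_smul F (1 : Matrix _ _ F)]
  exact smul_ne_zero two_ne_zero one_ne_zero

lemma eq_bot_or_eq_span_dagMinSet [NeZero (2 : F)] {k₁ ℓ : ℕ} (hℓ : Odd (ℓ - 1))
    {I : Submodule F (MatCarrier F (k₁ + k₁))} (hI : I ≤ Submodule.span F (dagMinSet F k₁ ℓ))
    (hideal : ∀ a ∈ dagMinSet F k₁ ℓ, ∀ b ∈ I, mProd F (k₁ + k₁) (ℓ - 1) a b ∈ I) :
    I = ⊥ ∨ I = Submodule.span F (dagMinSet F k₁ ℓ) := by
  rw [dagMinSet_eq_map, Submodule.span_eq] at hI ⊢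
  set ι : Matrix (Fin (k₁ + k₁)) (Fin (k₁ + k₁)) F →ₗ[F] MatCarrier F (k₁ + k₁) :=
    Finsupp.lsingle (0, ℓ - 1)
  have hι : Function.Injective ι := Finsupp.single_injective _
  have map_comap : (I.comap ι).map ι = I :=
    Submodule.map_comap_eq_of_le (hI.trans (LinearMap.map_le_range))
  have comap_le : I.comap ι ≤ daggerFixed F k₁ :=
    (Submodule.comap_mono hI).trans (Submodule.comap_map_eq_of_injective hι _).le
  have comap_ideal : ∀ a ∈ daggerFixed F k₁, ∀ b ∈ I.comap ι, a * b + b * a ∈ I.comap ι := by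
    intro a ha b hb
    have h := hideal _ ⟨a, mDagger_eq_self_iff.2 ha, rfl⟩ _ hb
    rwa [Finsupp.lsingle_apply, mProd_single_zero_single_zero hℓ, neg_mem_iff] at h
  rw [← map_comap]
  exact (eq_bot_or_eq_selfAdjointMatricesSubmodule isUnit_det_symplecticForm
    transpose_symplecticForm comap_le comap_ideal).imp
      (fun h => by rw [h, Submodule.map_bot]) (fun h => by rw [h])

end MinimalWeightProduct

theorem RkklDagger_minimal_weight_jordan_typeC_general (F : Type*) [Field F] [NeZero (2 : F)]
    (k₁ ℓ : ℕ) (hk₁ : 1 ≤ k₁) (hℓ : 2 ≤ ℓ) (heven : Even ℓ) :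
    ((RkklDagger F k₁ ℓ ⊓ mWeight F (k₁ + k₁) ℓ :
        Submodule F (MatCarrier F (k₁ + k₁))) : Set (MatCarrier F (k₁ + k₁)))
      = dagMinSet F k₁ ℓ ∧
    (∀ w w' : Matrix (Fin (k₁ + k₁)) (Fin (k₁ + k₁)) F,
      mDagger F k₁ w = w → mDagger F k₁ w' = w' →
      mProd F (k₁ + k₁) (ℓ - 1) (Finsupp.single ((0 : ℕ), ℓ - 1) w)
          (Finsupp.single ((0 : ℕ), ℓ - 1) w')
        = -(Finsupp.single ((0 : ℕ), ℓ - 1) (w * w' + w' * w))) ∧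
    (Set.InjOn (fun w : Matrix (Fin (k₁ + k₁)) (Fin (k₁ + k₁)) F =>
        -(Finsupp.single ((0 : ℕ), ℓ - 1) w : MatCarrier F (k₁ + k₁)))
      {w | mDagger F k₁ w = w}) ∧
    ((fun w : Matrix (Fin (k₁ + k₁)) (Fin (k₁ + k₁)) F =>
        -(Finsupp.single ((0 : ℕ), ℓ - 1) w : MatCarrier F (k₁ + k₁))) ''
      {w | mDagger F k₁ w = w} = dagMinSet F k₁ ℓ) ∧
    (∀ w w' : Matrix (Fin (k₁ + k₁)) (Fin (k₁ + k₁)) F,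
      mDagger F k₁ w = w → mDagger F k₁ w' = w' →
      -(Finsupp.single ((0 : ℕ), ℓ - 1) (w * w' + w' * w) : MatCarrier F (k₁ + k₁))
        = mProd F (k₁ + k₁) (ℓ - 1) (-(Finsupp.single ((0 : ℕ), ℓ - 1) w))
            (-(Finsupp.single ((0 : ℕ), ℓ - 1) w'))) ∧
    (∀ x ∈ dagMinSet F k₁ ℓ, ∀ y ∈ dagMinSet F k₁ ℓ,
      mProd F (k₁ + k₁) (ℓ - 1) x y ∈ dagMinSet F k₁ ℓ ∧
      mProd F (k₁ + k₁) (ℓ - 1) x y = mProd F (k₁ + k₁) (ℓ - 1) y x ∧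
      mProd F (k₁ + k₁) (ℓ - 1)
          (mProd F (k₁ + k₁) (ℓ - 1) (mProd F (k₁ + k₁) (ℓ - 1) x x) y) x
        = mProd F (k₁ + k₁) (ℓ - 1) (mProd F (k₁ + k₁) (ℓ - 1) x x)
            (mProd F (k₁ + k₁) (ℓ - 1) y x)) ∧
    (∃ x ∈ dagMinSet F k₁ ℓ, ∃ y ∈ dagMinSet F k₁ ℓ,
      mProd F (k₁ + k₁) (ℓ - 1) x y ≠ 0) ∧
    (∀ I : Submodule F (MatCarrier F (k₁ + k₁)),
      I ≤ Submodule.span F (dagMinSet F k₁ ℓ) →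
      (∀ a ∈ dagMinSet F k₁ ℓ, ∀ b ∈ I, mProd F (k₁ + k₁) (ℓ - 1) a b ∈ I) →
      I = ⊥ ∨ I = Submodule.span F (dagMinSet F k₁ ℓ)) := by
  have hodd : Odd (ℓ - 1) := Nat.Even.sub_odd (by omega) heven odd_one
  refine ⟨RkklDagger_inf_mWeight_eq_dagMinSet hodd,
    fun w w' _ _ => mProd_single_zero_single_zero hodd w w',
    (neg_injective.comp (Finsupp.single_injective _)).injOn,
    image_neg_single_eq_dagMinSet, fun w w' _ _ => ?_, fun x hx y hy => ?_,
    exists_mProd_ne_zero_of_mem_dagMinSet hk₁ hodd,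
    fun I hI hideal => eq_bot_or_eq_span_dagMinSet hodd hI hideal⟩
  · simp only [← Finsupp.single_neg, mProd_single_zero_single_zero hodd, neg_mul_neg]
  · refine ⟨mProd_mem_dagMinSet hodd hx hy, ?_⟩
    obtain ⟨u, -, rfl⟩ := hx
    obtain ⟨v, -, rfl⟩ := hy
    refine ⟨?_, mProd_single_zero_jordan_identity hodd u v⟩
    rw [mProd_single_zero_single_zero hodd, mProd_single_zero_single_zero hodd, add_comm (u * v)]

/-- **Theorem 4.3, type C**: let `k = 2k₁` be even, `ℓ ≥ 2` even, `X = R†_{k×k,ℓ}`,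
with minimal-weight subspace `X^{(ℓ)} = X ∩ R_{k×k}^{(ℓ)}` and product
`x ∘ y = x⁽ˡ⁻¹⁾y`.  Then `X^{(ℓ)} = {w(0,ℓ-1) : w† = w}`, on it
`w(0,ℓ-1) ∘ w'(0,ℓ-1) = -(ww'+w'w)(0,ℓ-1)`, the map `w ↦ -w(0,ℓ-1)` is an
isomorphism from the Jordan algebra `{w : w† = w}` onto `(X^{(ℓ)}, ∘)`, and
`(X^{(ℓ)}, ∘)` is a simple Jordan algebra (of type C, independent of `ℓ`). -/
theorem RkklDagger_minimal_weight_jordan_typeC (F : Type*) [Field F] [CharZero F]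
    (k₁ ℓ : ℕ) (hk₁ : 1 ≤ k₁) (hℓ : 2 ≤ ℓ) (heven : Even ℓ) :
    -- identification of the minimal-weight subspace
    ((RkklDagger F k₁ ℓ ⊓ mWeight F (k₁ + k₁) ℓ :
        Submodule F (MatCarrier F (k₁ + k₁))) : Set (MatCarrier F (k₁ + k₁)))
      = dagMinSet F k₁ ℓ ∧
    -- the product formula
    (∀ w w' : Matrix (Fin (k₁ + k₁)) (Fin (k₁ + k₁)) F,
      mDagger F k₁ w = w → mDagger F k₁ w' = w' →
      mProd F (k₁ + k₁) (ℓ - 1) (Finsupp.single ((0 : ℕ), ℓ - 1) w)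
          (Finsupp.single ((0 : ℕ), ℓ - 1) w')
        = -(Finsupp.single ((0 : ℕ), ℓ - 1) (w * w' + w' * w))) ∧
    -- w ↦ -w(0,ℓ-1) is an isomorphism from {w : w† = w} onto (X^{(ℓ)}, ∘)
    (Set.InjOn (fun w : Matrix (Fin (k₁ + k₁)) (Fin (k₁ + k₁)) F =>
        -(Finsupp.single ((0 : ℕ), ℓ - 1) w : MatCarrier F (k₁ + k₁)))
      {w | mDagger F k₁ w = w}) ∧
    ((fun w : Matrix (Fin (k₁ + k₁)) (Fin (k₁ + k₁)) F =>
        -(Finsupp.single ((0 : ℕ), ℓ - 1) w : MatCarrier F (k₁ + k₁))) ''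
      {w | mDagger F k₁ w = w} = dagMinSet F k₁ ℓ) ∧
    (∀ w w' : Matrix (Fin (k₁ + k₁)) (Fin (k₁ + k₁)) F,
      mDagger F k₁ w = w → mDagger F k₁ w' = w' →
      -(Finsupp.single ((0 : ℕ), ℓ - 1) (w * w' + w' * w) : MatCarrier F (k₁ + k₁))
        = mProd F (k₁ + k₁) (ℓ - 1) (-(Finsupp.single ((0 : ℕ), ℓ - 1) w))
            (-(Finsupp.single ((0 : ℕ), ℓ - 1) w'))) ∧
    -- (X^{(ℓ)}, ∘) is a simple Jordan algebra
    (∀ x ∈ dagMinSet F k₁ ℓ, ∀ y ∈ dagMinSet F k₁ ℓ,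
      mProd F (k₁ + k₁) (ℓ - 1) x y ∈ dagMinSet F k₁ ℓ ∧
      mProd F (k₁ + k₁) (ℓ - 1) x y = mProd F (k₁ + k₁) (ℓ - 1) y x ∧
      mProd F (k₁ + k₁) (ℓ - 1)
          (mProd F (k₁ + k₁) (ℓ - 1) (mProd F (k₁ + k₁) (ℓ - 1) x x) y) x
        = mProd F (k₁ + k₁) (ℓ - 1) (mProd F (k₁ + k₁) (ℓ - 1) x x)
            (mProd F (k₁ + k₁) (ℓ - 1) y x)) ∧
    (∃ x ∈ dagMinSet F k₁ ℓ, ∃ y ∈ dagMinSet F k₁ ℓ,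
      mProd F (k₁ + k₁) (ℓ - 1) x y ≠ 0) ∧
    (∀ I : Submodule F (MatCarrier F (k₁ + k₁)),
      I ≤ Submodule.span F (dagMinSet F k₁ ℓ) →
      (∀ a ∈ dagMinSet F k₁ ℓ, ∀ b ∈ I, mProd F (k₁ + k₁) (ℓ - 1) a b ∈ I) →
      I = ⊥ ∨ I = Submodule.span F (dagMinSet F k₁ ℓ)) :=
  RkklDagger_minimal_weight_jordan_typeC_general F k₁ ℓ hk₁ hℓ heven
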